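/- arXiv:2201.10932 — 4 statements merged into one kernel-verified Lean document; each statement's English description precedes it below -/
import Mathlib

section
/- For every natural number n there exists an n-saturated closed graph on the Cantor space; that is, there is a binary relation E on 2^ℕ which is symmetric and reflexive, whose graph {(x,y) : E(x,y)} is a closed subset of 2^ℕ × 2^ℕ, and such that the graph (2^ℕ, E) is n-saturated. -/
/-- A graph (given by its edge relation `E` on the vertex set `V`) is `n`-saturated if
for every finite set `A` of vertices with `|A| < n` and every type `f : A → {0,1}`
(coded as a Boolean-valued function on `V`), there is a vertex `x ∉ A` realizing `f` over `A`,
i.e. for all `a ∈ A`, `E a x` holds iff `f a = 1`. -/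
def IsNSaturated {V : Type*} (E : V → V → Prop) (n : ℕ) : Prop :=
  ∀ A : Finset V, A.card < n → ∀ f : V → Bool,
    ∃ x, x ∉ A ∧ ∀ a ∈ A, (E a x ↔ f a = true)

/-!
Join `u` and `v` when they are equal or one is the image of the other under one of finitely many
continuous maps `g i`; the resulting graph is closed. If the joint fibres of the `g i` are infinite,
then a type over a finite set `A` is realized by choosing `x` so that the points `g i x` exhaust the
prescribed neighbours and otherwise avoid `A`, while `x` also avoids the finite set
`A ∪ ⋃ i, g i '' A`.
A space that maps continuously onto its square carries arbitrarily many such maps: map it onto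
`X × Xⁿ` and take the coordinates of the second factor.
-/

open Set Function

/-- The graph generated by a family of self-maps `g i` of `V`: the union of the diagonal, the graphs
of the maps `g i` and their transposes. -/
def LinkedBy {ι V : Type*} (g : ι → V → V) (u v : V) : Prop :=
  u = v ∨ ∃ i, u = g i v ∨ v = g i u

namespace LinkedBy

variable {ι V : Type*} {g : ι → V → V}

@[refl]
protected theorem refl (u : V) : LinkedBy g u u := Or.inl rfl

@[symm]
protected theorem symm {u v : V} (huv : LinkedBy g u v) : LinkedBy g v u := by
  rcases huv with h | ⟨i, h⟩
  · exact Or.inl h.symm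
  · exact Or.inr ⟨i, h.symm⟩

theorem isClosed_setOf [Finite ι] [TopologicalSpace V] [T2Space V]
    (hg : ∀ i, Continuous (g i)) : IsClosed {q : V × V | LinkedBy g q.1 q.2} := by
  have h_union : {q : V × V | LinkedBy g q.1 q.2} =
      {q | q.1 = q.2} ∪ ⋃ i, ({q | q.1 = g i q.2} ∪ {q | q.2 = g i q.1}) := by
    ext q
    simp only [LinkedBy, mem_ofPred_eq, mem_union, mem_iUnion]
  rw [h_union]
  refine (isClosed_eq continuous_fst continuous_snd).union <| isClosed_iUnion_of_finite fun i ↦ ?_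
  exact (isClosed_eq continuous_fst ((hg i).comp continuous_snd)).union
    (isClosed_eq continuous_snd ((hg i).comp continuous_fst))

theorem iff_mem_range {a x : V} (hne : a ≠ x) (hg : ∀ i, g i a ≠ x) :
    LinkedBy g a x ↔ a ∈ range fun i ↦ g i x := by
  simp only [LinkedBy, hne, fun i ↦ (hg i).symm, or_false, false_or, mem_range, eq_comm (a := a)]

end LinkedBy

theorem exists_subset_range_subset_insert {ι V : Type*} [Fintype ι] (B : Finset V)
    (hB : B.card ≤ Fintype.card ι) (d : V) :
    ∃ e : ι → V, (B : Set V) ⊆ range e ∧ range e ⊆ insert d (B : Set V) := by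
  obtain ⟨j⟩ : Nonempty (B ↪ ι) := Embedding.nonempty_of_card_le (by simpa using hB)
  refine ⟨extend j Subtype.val fun _ ↦ d, ?_, ?_⟩
  · rw [range_extend j.injective, Subtype.range_coe]
    exact subset_union_left
  · refine (range_extend_subset _ _ _).trans (union_subset ?_ ?_)
    · rw [Subtype.range_coe]
      exact subset_insert d _
    · rintro _ ⟨_, _, rfl⟩
      exact mem_insert d _

theorem LinkedBy.isNSaturated {ι V : Type*} [Fintype ι] [Infinite V] {g : ι → V → V}
    (hfib : ∀ e : ι → V, {x | (fun i ↦ g i x) = e}.Infinite) {n : ℕ}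
    (hn : n ≤ Fintype.card ι + 1) : IsNSaturated (LinkedBy g) n := by
  intro A hA f
  obtain ⟨d, hd⟩ := Infinite.exists_notMem_finset A
  have h_card : (A.filter (f · = true)).card ≤ Fintype.card ι := by
    have := A.card_filter_le (f · = true)
    lia
  obtain ⟨e, h_sub, h_sup⟩ := exists_subset_range_subset_insert _ h_card d
  have mem_range_e {a : V} (ha : a ∈ A) : a ∈ range e ↔ f a = true := by
    refine ⟨fun h ↦ ?_, fun h ↦ h_sub (Finset.mem_filter.2 ⟨ha, h⟩)⟩
    rcases h_sup h with rfl | h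
    · exact absurd ha hd
    · exact (Finset.mem_filter.1 h).2
  have h_fin : ((A : Set V) ∪ ⋃ i, g i '' A).Finite :=
    A.finite_toSet.union (finite_iUnion fun i ↦ A.finite_toSet.image (g i))
  obtain ⟨x, hxe, hx⟩ := (hfib e).exists_notMem_finite h_fin
  have hxA : x ∉ A := fun h ↦ hx (Or.inl h)
  refine ⟨x, hxA, fun a ha ↦ ?_⟩
  have h_image : ∀ i, g i a ≠ x := fun i h ↦ hx (Or.inr (mem_iUnion_of_mem i ⟨a, ha, h⟩))
  rw [LinkedBy.iff_mem_range (ne_of_mem_of_not_mem ha hxA) h_image, hxe, mem_range_e ha]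

theorem exists_continuous_surjective_fin_arrow {X : Type*} [TopologicalSpace X] [Nonempty X]
    {p : X → X × X} (hp : Continuous p) (hp_surj : Surjective p) (n : ℕ) :
    ∃ q : X → Fin n → X, Continuous q ∧ Surjective q := by
  induction n with
  | zero => exact ⟨fun _ ↦ Fin.elim0, continuous_const, surjective_to_subsingleton _⟩
  | succ n ih =>
    obtain ⟨q, hq, hq_surj⟩ := ih
    exact ⟨fun x ↦ Fin.cons (p x).1 (q (p x).2), hp.fst.finCons (hq.comp hp.snd),
      (Fin.consEquiv fun _ ↦ X).surjective.comp ((surjective_id.prodMap hq_surj).comp hp_surj)⟩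

theorem infinite_setOf_snd_eq {X Y Z : Type*} [Infinite Y] {h : X → Y × Z}
    (hh : Surjective h) (z : Z) : {x | (h x).2 = z}.Infinite := by
  have h_image : (fun x ↦ (h x).1) '' {x | (h x).2 = z} = univ := by
    refine eq_univ_of_forall fun y ↦ ?_
    obtain ⟨x, hx⟩ := hh (y, z)
    exact ⟨x, congrArg Prod.snd hx, congrArg Prod.fst hx⟩
  exact Infinite.of_image _ (h_image ▸ infinite_univ)

theorem exists_nSaturated_closed_graph_on_cantor_general {X : Type*} [TopologicalSpace X]
    [T2Space X] [Infinite X] {p : X → X × X} (hp : Continuous p) (hp_surj : Surjective p) (n : ℕ) :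
    ∃ E : X → X → Prop,
      Symmetric E ∧ Reflexive E ∧ IsClosed {q : X × X | E q.1 q.2} ∧ IsNSaturated E n := by
  obtain ⟨q, hq, hq_surj⟩ := exists_continuous_surjective_fin_arrow hp hp_surj n
  let g : Fin n → X → X := fun i x ↦ q (p x).2 i
  have hg : ∀ i, Continuous (g i) := fun i ↦ (continuous_apply i).comp (hq.comp hp.snd)
  have hfib : ∀ e : Fin n → X, {x | (fun i ↦ g i x) = e}.Infinite :=
    infinite_setOf_snd_eq ((surjective_id.prodMap hq_surj).comp hp_surj)
  exact ⟨LinkedBy g, fun _ _ ↦ LinkedBy.symm, LinkedBy.refl, LinkedBy.isClosed_setOf hg,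
    LinkedBy.isNSaturated hfib (by simp)⟩

/-- For every natural number `n` there is an `n`-saturated closed graph on the Cantor
space `2^ℕ`: a symmetric reflexive relation `E` on `ℕ → Bool` whose edge set is a closed
subset of the square of the Cantor space and which is `n`-saturated. -/
theorem exists_nSaturated_closed_graph_on_cantor (n : ℕ) :
    ∃ E : (ℕ → Bool) → (ℕ → Bool) → Prop,
      Symmetric E ∧ Reflexive E ∧
      IsClosed {q : (ℕ → Bool) × (ℕ → Bool) | E q.1 q.2} ∧
      IsNSaturated E n := by
  let p : (ℕ → Bool) ≃ₜ (ℕ → Bool) × (ℕ → Bool) :=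
    (Homeomorph.piCongrLeft (Y := fun _ ↦ Bool) Equiv.natSumNatEquivNat).symm.trans
      Homeomorph.sumArrowHomeomorphProdArrow
  exact exists_nSaturated_closed_graph_on_cantor_general p.continuous p.surjective n
end

section
/- Fix n ≥ 1 and a weakly n-saturated graph H₀ on the finite vertex set V₀ = Fin k. Then there exists m ∈ ℕ such that, under the uniform probability measure on {0,1}^{S_m}, the event {σ : H_m(σ) is n-saturated} has positive probability. -/
/-- Weak `n`-saturation: every set of fewer than `n` vertices has a common neighbour. -/
def IsWeaklyNSaturated {V : Type*} (E : V → V → Prop) (n : ℕ) : Prop :=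
  ∀ A : Finset V, A.card < n → ∃ x, ∀ a ∈ A, E a x

/-- The set `S_m` of unordered pairs of distinct vertices `(i,s), (j,t)` of
`V_m = Fin k × Fin (m+1)` such that `(i,j)` is an edge of `H₀` and `(s,t) ≠ (0,0)`. -/
noncomputable def randomPairs (k m : ℕ) (E0 : Fin k → Fin k → Prop) :
    Finset (Sym2 (Fin k × Fin (m + 1))) :=
  open Classical in
  Finset.univ.filter fun e =>
    ¬e.IsDiag ∧ ∃ (a b : Fin k) (c d : Fin (m + 1)),
      e = s((a, c), (b, d)) ∧ E0 a b ∧ ¬(c = 0 ∧ d = 0)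

/-- The random graph `H_m(σ)` on `V_m = Fin k × Fin (m+1)` determined by a coin-flip
function `σ : S_m → {0,1}`: all loops; the edges `((i,0),(j,0))` for `(i,j) ∈ E(H₀)`;
and the (symmetrized) pairs chosen by `σ`. -/
noncomputable def randomGraph {k m : ℕ} (E0 : Fin k → Fin k → Prop)
    (σ : {e // e ∈ randomPairs k m E0} → Bool) :
    Fin k × Fin (m + 1) → Fin k × Fin (m + 1) → Prop := fun u v =>
  u = v ∨ (u.2 = 0 ∧ v.2 = 0 ∧ E0 u.1 v.1) ∨
    ∃ h : s(u, v) ∈ randomPairs k m E0, σ ⟨s(u, v), h⟩ = true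

/-- The uniform probability measure on a finite nonempty type (with the discrete
σ-algebra). -/
noncomputable def uniformMeasure (α : Type*) [Fintype α] [Nonempty α] :
    @MeasureTheory.Measure α ⊤ :=
  @PMF.toMeasure α ⊤ (PMF.uniformOfFintype α)

/-!
Fix `A` with `j < n` elements, a pattern `f : A → Bool` and a vertex `i` of `H₀` adjacent to every
first coordinate of `A`. For the at least `m - j` values `t ≠ 0` with `(i, t) ∉ A`, the pairs
joining `(i, t)` to `A` are random, and no pair occurs for two values of `t`. Hence the events
"`(i, t)` realizes `f`" are independent of probability `2⁻ʲ`, and all of them fail with probability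
at most `(1 - 2⁻ʲ) ^ (m - j)`. There are only `O(m ^ j)` choices of `(A, f)`, so by the union bound
`H_m(σ)` is `n`-saturated with probability tending to `1`.
-/

open MeasureTheory Filter Topology
open Function (Injective uncurry)

section UniformMeasure

variable {α β γ ι κ η : Type*}

instance [Fintype α] [Nonempty α] : @IsProbabilityMeasure α ⊤ (uniformMeasure α) :=
  @PMF.toMeasure.isProbabilityMeasure α ⊤ (PMF.uniformOfFintype α)

theorem uniformMeasure_real_apply [Fintype α] [Nonempty α] (s : Set α) :
    (uniformMeasure α).real s = Nat.card s / Nat.card α := by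
  classical
  let _ : MeasurableSpace α := ⊤
  have h : uniformMeasure α s = Fintype.card s / Fintype.card α :=
    PMF.toMeasure_uniformOfFintype_apply s MeasurableSpace.measurableSet_top
  simp [Measure.real, h]

theorem uniformMeasure_real_compl_singleton [Fintype α] [Nonempty α] (a : α) :
    (uniformMeasure α).real {a}ᶜ = 1 - (Fintype.card α : ℝ)⁻¹ := by
  rw [probReal_compl_eq_one_sub MeasurableSpace.measurableSet_top, uniformMeasure_real_apply]
  simp

theorem uniformMeasure_real_preimage_fst [Fintype α] [Nonempty α] [Fintype β] [Nonempty β]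
    (φ : α ≃ β × γ) (s : Set β) :
    (uniformMeasure α).real {a | (φ a).1 ∈ s} = (uniformMeasure β).real s := by
  have : Finite (β × γ) := .of_equiv α φ
  have : Nonempty (β × γ) := φ.nonempty_congr.1 inferInstance
  have : Finite γ := .of_surjective (Prod.snd : β × γ → γ) Prod.snd_surjective
  have : Nonempty γ := .map Prod.snd ‹Nonempty (β × γ)›
  have hs : Nat.card {a | (φ a).1 ∈ s} = Nat.card s * Nat.card γ := by
    rw [← Nat.card_prod]
    exact Nat.card_congr
      ((φ.subtypeEquiv fun _ ↦ Iff.rfl).trans Equiv.prodSubtypeFstEquivSubtypeProd)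
  have hγ : (Nat.card γ : ℝ) ≠ 0 := Nat.cast_ne_zero.2 Nat.card_pos.ne'
  rw [uniformMeasure_real_apply, uniformMeasure_real_apply, hs, Nat.card_congr φ, Nat.card_prod,
    Nat.cast_mul, Nat.cast_mul, mul_div_mul_right _ _ hγ]

theorem uniformMeasure_real_univ_pi [Fintype ι] [DecidableEq ι] [Fintype α] [Nonempty α]
    (s : ι → Set α) :
    (uniformMeasure (ι → α)).real (Set.univ.pi s) = ∏ i, (uniformMeasure α).real (s i) := by
  simp only [uniformMeasure_real_apply]
  rw [Nat.card_congr (Equiv.Set.univPi s), Nat.card_pi, Nat.card_pi, Nat.cast_prod, Nat.cast_prod,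
    Finset.prod_div_distrib]

theorem uniformMeasure_real_comp_mem [Fintype ι] [DecidableEq ι] [Fintype κ] [DecidableEq κ]
    [Fintype α] [Nonempty α] {e : κ → ι} (he : Injective e) (s : Set (κ → α)) :
    (uniformMeasure (ι → α)).real {σ | σ ∘ e ∈ s} = (uniformMeasure (κ → α)).real s := by
  classical
  let split : ι ≃ κ ⊕ ↥(Set.range e)ᶜ :=
    (Equiv.Set.sumCompl (Set.range e)).symm.trans
      ((Equiv.ofInjective e he).symm.sumCongr (Equiv.refl _))
  exact uniformMeasure_real_preimage_fst
    ((split.arrowCongr (Equiv.refl α)).trans (Equiv.sumArrowEquivProdArrow _ _ _)) s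

theorem uniformMeasure_real_forall_block_ne [Fintype ι] [DecidableEq ι] [Fintype κ] [Fintype η]
    [Fintype α] [Nonempty α] {e : κ → η → ι} (he : Injective (uncurry e)) (f : κ → η → α) :
    (uniformMeasure (ι → α)).real {σ | ∀ x, σ ∘ e x ≠ f x} =
      (1 - ((Fintype.card α : ℝ) ^ Fintype.card η)⁻¹) ^ Fintype.card κ := by
  classical
  let s : Set (κ → η → α) := Set.univ.pi fun x ↦ {f x}ᶜ
  have hs : {σ : ι → α | ∀ x, σ ∘ e x ≠ f x} =
      {σ | σ ∘ uncurry e ∈ {τ | Function.curry τ ∈ s}} := by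
    ext σ
    simp [s, funext_iff]
  have hcurry : (uniformMeasure (κ × η → α)).real {τ | Function.curry τ ∈ s} =
      (uniformMeasure (κ → η → α)).real s :=
    uniformMeasure_real_preimage_fst
      ((Equiv.curry κ η α).trans (Equiv.prodUnique _ Unit).symm) s
  rw [hs, uniformMeasure_real_comp_mem he, hcurry, uniformMeasure_real_univ_pi]
  simp [uniformMeasure_real_compl_singleton]

end UniformMeasure

section Extension

variable {V : Type*}

/-- The extension property of the pattern `f` over `A`: some vertex outside `A` is adjacent to
exactly the vertices of `A` selected by `f`. The pattern is a function on `A` only, so that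
a finite vertex set carries only polynomially many patterns over sets of bounded size. -/
def HasExtension (E : V → V → Prop) (A : Finset V) (f : A → Bool) : Prop :=
  ∃ x ∉ A, ∀ a : A, E a x ↔ f a = true

theorem IsNSaturated.of_hasExtension {E : V → V → Prop} {n : ℕ}
    (h : ∀ A : Finset V, A.card < n → ∀ f : A → Bool, HasExtension E A f) : IsNSaturated E n := by
  intro A hA f
  obtain ⟨x, hxA, hx⟩ := h A hA fun a ↦ f a
  exact ⟨x, hxA, fun a ha ↦ hx ⟨a, ha⟩⟩

end Extension

section FreshCopies

variable {W : Type*} [DecidableEq W] {m : ℕ}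

/-- The indices `t` of the copies `(i, t)` of the vertex `i` that serve as candidates for realizing
patterns over `A`. The copy `t = 0` is excluded because its edges to the vertices `(j, 0)` are not
random. -/
def freshCopies (A : Finset (W × Fin (m + 1))) (i : W) : Finset (Fin (m + 1)) :=
  {t | t ≠ 0 ∧ (i, t) ∉ A}

theorem mem_freshCopies {A : Finset (W × Fin (m + 1))} {i : W} {t : Fin (m + 1)} :
    t ∈ freshCopies A i ↔ t ≠ 0 ∧ (i, t) ∉ A := by
  simp [freshCopies]

theorem sub_card_le_card_freshCopies (A : Finset (W × Fin (m + 1))) (i : W) :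
    m - A.card ≤ (freshCopies A i).card := by
  have hsub : Finset.univ.erase (0 : Fin (m + 1)) \ A.image Prod.snd ⊆ freshCopies A i := by
    intro t ht
    obtain ⟨ht0, htA⟩ := Finset.mem_sdiff.1 ht
    exact mem_freshCopies.2
      ⟨Finset.ne_of_mem_erase ht0, fun h ↦ htA (Finset.mem_image_of_mem Prod.snd h)⟩
  calc m - A.card
      ≤ (Finset.univ.erase (0 : Fin (m + 1))).card - (A.image Prod.snd).card := by
        simpa using Nat.sub_le_sub_left Finset.card_image_le m
    _ ≤ (Finset.univ.erase (0 : Fin (m + 1)) \ A.image Prod.snd).card :=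
        Finset.le_card_sdiff _ _
    _ ≤ (freshCopies A i).card := Finset.card_le_card hsub

end FreshCopies

section RandomGraph

variable {k m : ℕ} {E0 : Fin k → Fin k → Prop}

theorem mk_mem_randomPairs {u v : Fin k × Fin (m + 1)} :
    s(u, v) ∈ randomPairs k m E0 ↔
      u ≠ v ∧ (E0 u.1 v.1 ∨ E0 v.1 u.1) ∧ ¬(u.2 = 0 ∧ v.2 = 0) := by
  simp only [randomPairs, Finset.mem_filter, Finset.mem_univ, true_and, Sym2.mk_isDiag_iff,
    Sym2.eq_iff]
  refine and_congr_right fun _ ↦ ⟨?_, ?_⟩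
  · rintro ⟨a, b, c, d, ⟨rfl, rfl⟩ | ⟨rfl, rfl⟩, hE, hcd⟩
    · exact ⟨.inl hE, hcd⟩
    · exact ⟨.inr hE, fun h ↦ hcd h.symm⟩
  · rintro ⟨hE | hE, hzero⟩
    · exact ⟨u.1, v.1, u.2, v.2, .inl ⟨rfl, rfl⟩, hE, hzero⟩
    · exact ⟨v.1, u.1, v.2, u.2, .inr ⟨rfl, rfl⟩, hE, fun h ↦ hzero h.symm⟩

theorem randomGraph_iff_of_mem_randomPairs {σ : {e // e ∈ randomPairs k m E0} → Bool}
    {u v : Fin k × Fin (m + 1)} (hmem : s(u, v) ∈ randomPairs k m E0) :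
    randomGraph E0 σ u v ↔ σ ⟨s(u, v), hmem⟩ = true := by
  obtain ⟨huv, -, hzero⟩ := mk_mem_randomPairs.1 hmem
  constructor
  · rintro (h | ⟨hu, hv, -⟩ | ⟨_, hσ⟩)
    · exact absurd h huv
    · exact absurd ⟨hu, hv⟩ hzero
    · exact hσ
  · exact fun hσ ↦ .inr (.inr ⟨hmem, hσ⟩)

theorem uniformMeasure_real_not_hasExtension_le {A : Finset (Fin k × Fin (m + 1))} {i : Fin k}
    (hi : ∀ a ∈ A, E0 a.1 i) (f : A → Bool) :
    (uniformMeasure ({e // e ∈ randomPairs k m E0} → Bool)).real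
        {σ | ¬HasExtension (randomGraph E0 σ) A f} ≤
      (1 - ((2 : ℝ) ^ A.card)⁻¹) ^ (m - A.card) := by
  have hne (t : freshCopies A i) (a : A) : a.1 ≠ (i, t.1) :=
    fun h ↦ (mem_freshCopies.1 t.2).2 (h ▸ a.2)
  have hmem (t : freshCopies A i) (a : A) : s(a.1, (i, t.1)) ∈ randomPairs k m E0 :=
    mk_mem_randomPairs.2 ⟨hne t a, .inl (hi a a.2), fun h ↦ (mem_freshCopies.1 t.2).1 h.2⟩
  let pair (t : freshCopies A i) (a : A) : {e // e ∈ randomPairs k m E0} :=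
    ⟨s(a.1, (i, t.1)), hmem t a⟩
  have hpair : Injective (uncurry pair) := by
    rintro ⟨t, a⟩ ⟨t', a'⟩ h
    rcases Sym2.eq_iff.1 (Subtype.ext_iff.1 h) with ⟨ha, ht⟩ | ⟨ha, -⟩
    · exact Prod.ext (Subtype.ext (Prod.ext_iff.1 ht).2) (Subtype.ext ha)
    · exact absurd ha (hne t' a)
  have hsub : {σ | ¬HasExtension (randomGraph E0 σ) A f} ⊆ {σ | ∀ t, σ ∘ pair t ≠ f} := by
    intro σ hσ t hf
    refine hσ ⟨(i, t), (mem_freshCopies.1 t.2).2, fun a ↦ ?_⟩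
    rw [randomGraph_iff_of_mem_randomPairs (hmem t a), ← hf]
    rfl
  have hpow : ((2 : ℝ) ^ A.card)⁻¹ ≤ 1 := inv_le_one_of_one_le₀ (one_le_pow₀ one_le_two)
  calc (uniformMeasure ({e // e ∈ randomPairs k m E0} → Bool)).real
          {σ | ¬HasExtension (randomGraph E0 σ) A f}
      ≤ (uniformMeasure _).real {σ | ∀ t, σ ∘ pair t ≠ f} := measureReal_mono hsub
    _ = (1 - ((2 : ℝ) ^ A.card)⁻¹) ^ (freshCopies A i).card := by
        simpa using uniformMeasure_real_forall_block_ne hpair fun _ ↦ f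
    _ ≤ (1 - ((2 : ℝ) ^ A.card)⁻¹) ^ (m - A.card) :=
        pow_le_pow_of_le_one (sub_nonneg.2 hpow) (sub_le_self _ (by positivity))
          (sub_card_le_card_freshCopies A i)

theorem uniformMeasure_real_exists_not_hasExtension_le {A : Finset (Fin k × Fin (m + 1))}
    {i : Fin k} (hi : ∀ a ∈ A, E0 a.1 i) :
    (uniformMeasure ({e // e ∈ randomPairs k m E0} → Bool)).real
        {σ | ∃ f, ¬HasExtension (randomGraph E0 σ) A f} ≤
      2 ^ A.card * (1 - ((2 : ℝ) ^ A.card)⁻¹) ^ (m - A.card) := by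
  rw [Set.ofPred_exists]
  calc (uniformMeasure _).real (⋃ f, {σ | ¬HasExtension (randomGraph E0 σ) A f})
      ≤ ∑ f, (uniformMeasure _).real {σ | ¬HasExtension (randomGraph E0 σ) A f} :=
        measureReal_iUnion_fintype_le _
    _ ≤ ∑ _f : A → Bool, (1 - ((2 : ℝ) ^ A.card)⁻¹) ^ (m - A.card) :=
        Finset.sum_le_sum fun f _ ↦ uniformMeasure_real_not_hasExtension_le hi f
    _ = 2 ^ A.card * (1 - ((2 : ℝ) ^ A.card)⁻¹) ^ (m - A.card) := by simp

theorem uniformMeasure_real_not_isNSaturated_le {n : ℕ} (hweak : IsWeaklyNSaturated E0 n) :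
    (uniformMeasure ({e // e ∈ randomPairs k m E0} → Bool)).real
        {σ | ¬IsNSaturated (randomGraph E0 σ) n} ≤
      ∑ j ∈ Finset.range n,
        2 ^ j * (((k * (m + 1)).choose j : ℝ) * (1 - ((2 : ℝ) ^ j)⁻¹) ^ (m - j)) := by
  let bad (A : Finset (Fin k × Fin (m + 1))) : Set ({e // e ∈ randomPairs k m E0} → Bool) :=
    {σ | ∃ f, ¬HasExtension (randomGraph E0 σ) A f}
  have hcover : {σ | ¬IsNSaturated (randomGraph E0 σ) n} ⊆
      ⋃ j ∈ Finset.range n, ⋃ A ∈ Finset.univ.powersetCard j, bad A := by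
    intro σ hσ
    contrapose! hσ
    simp only [bad, Set.mem_iUnion, Set.mem_ofPred_eq, Finset.mem_range, Finset.mem_powersetCard,
      Finset.subset_univ, true_and, not_exists, not_not] at hσ ⊢
    exact .of_hasExtension fun A hA f ↦ hσ _ hA A rfl f
  have hbad (j : ℕ) (hj : j < n) (A : Finset (Fin k × Fin (m + 1))) (hA : A.card = j) :
      (uniformMeasure _).real (bad A) ≤ 2 ^ j * (1 - ((2 : ℝ) ^ j)⁻¹) ^ (m - j) := by
    subst hA
    obtain ⟨i, hi⟩ := hweak (A.image Prod.fst) (Finset.card_image_le.trans_lt hj)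
    exact uniformMeasure_real_exists_not_hasExtension_le fun a ha ↦
      hi _ (Finset.mem_image_of_mem _ ha)
  calc (uniformMeasure _).real {σ | ¬IsNSaturated (randomGraph E0 σ) n}
      ≤ (uniformMeasure _).real (⋃ j ∈ Finset.range n, ⋃ A ∈ Finset.univ.powersetCard j, bad A) :=
        measureReal_mono hcover
    _ ≤ ∑ j ∈ Finset.range n, ∑ A ∈ Finset.univ.powersetCard j, (uniformMeasure _).real (bad A) :=
        (measureReal_biUnion_finset_le _ _).trans
          (Finset.sum_le_sum fun _ _ ↦ measureReal_biUnion_finset_le _ _)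
    _ ≤ ∑ j ∈ Finset.range n, ∑ _A ∈ (Finset.univ : Finset (Fin k × Fin (m + 1))).powersetCard j,
          2 ^ j * (1 - ((2 : ℝ) ^ j)⁻¹) ^ (m - j) :=
        Finset.sum_le_sum fun j hj ↦ Finset.sum_le_sum fun A hA ↦
          hbad j (Finset.mem_range.1 hj) A (Finset.mem_powersetCard.1 hA).2
    _ = _ := by simp [mul_left_comm]

theorem one_sub_le_uniformMeasure_real_isNSaturated {n : ℕ} (hweak : IsWeaklyNSaturated E0 n) :
    1 - ∑ j ∈ Finset.range n,
        2 ^ j * (((k * (m + 1)).choose j : ℝ) * (1 - ((2 : ℝ) ^ j)⁻¹) ^ (m - j)) ≤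
      (uniformMeasure ({e // e ∈ randomPairs k m E0} → Bool)).real
        {σ | IsNSaturated (randomGraph E0 σ) n} := by
  have hfail := uniformMeasure_real_not_isNSaturated_le (m := m) hweak
  rw [← Set.compl_ofPred, probReal_compl_eq_one_sub MeasurableSpace.measurableSet_top] at hfail
  exact sub_le_comm.1 hfail

end RandomGraph

theorem tendsto_choose_mul_pow (c j : ℕ) {ρ : ℝ} (hρ₀ : 0 ≤ ρ) (hρ₁ : ρ < 1) :
    Tendsto (fun m : ℕ ↦ ((c * (m + 1)).choose j : ℝ) * ρ ^ (m - j)) atTop (𝓝 0) := by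
  rw [← tendsto_add_atTop_iff_nat j]
  have hlim : Tendsto (fun m : ℕ ↦ ((c * (j + 2) : ℕ) : ℝ) ^ j * ((m : ℝ) ^ j * ρ ^ m))
      atTop (𝓝 0) := by
    simpa using (tendsto_pow_const_mul_const_pow_of_lt_one j hρ₀ hρ₁).const_mul _
  refine squeeze_zero' (.of_forall fun m ↦ by positivity) ?_ hlim
  filter_upwards [eventually_ge_atTop 1] with m hm
  have hchoose : (c * (m + j + 1)).choose j ≤ (c * (j + 2)) ^ j * m ^ j :=
    calc (c * (m + j + 1)).choose j
        ≤ (c * (m + j + 1)) ^ j := Nat.choose_le_pow _ _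
      _ ≤ (c * (j + 2) * m) ^ j := by
          rw [mul_assoc]
          gcongr
          nlinarith
      _ = (c * (j + 2)) ^ j * m ^ j := mul_pow _ _ _
  rw [Nat.add_sub_cancel, ← mul_assoc]
  gcongr
  exact_mod_cast hchoose

theorem exists_m_randomGraph_nSaturated_pos_prob_general {k n : ℕ} {E0 : Fin k → Fin k → Prop}
    (hweak : IsWeaklyNSaturated E0 n) :
    Tendsto (fun m ↦ (uniformMeasure ({e // e ∈ randomPairs k m E0} → Bool)).real
      {σ | IsNSaturated (randomGraph E0 σ) n}) atTop (𝓝 1) := by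
  have hterm (j : ℕ) : Tendsto (fun m : ℕ ↦
      2 ^ j * (((k * (m + 1)).choose j : ℝ) * (1 - ((2 : ℝ) ^ j)⁻¹) ^ (m - j))) atTop (𝓝 0) := by
    have hpow : ((2 : ℝ) ^ j)⁻¹ ≤ 1 := inv_le_one_of_one_le₀ (one_le_pow₀ one_le_two)
    simpa only [mul_zero] using (tendsto_choose_mul_pow k j (sub_nonneg.2 hpow)
      (sub_lt_self _ (by positivity))).const_mul (2 ^ j)
  have hsum := (tendsto_finsetSum (Finset.range n) fun j _ ↦ hterm j).const_sub 1
  rw [Finset.sum_const_zero, sub_zero] at hsum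
  exact tendsto_of_tendsto_of_tendsto_of_le_of_le hsum tendsto_const_nhds
    (fun _ ↦ one_sub_le_uniformMeasure_real_isNSaturated hweak) fun _ ↦ measureReal_le_one

/-- Given `n ≥ 1` and a weakly `n`-saturated graph `H₀` on `Fin k`, there is `m ∈ ℕ` such
that with positive probability (with respect to the uniform measure on `{0,1}^{S_m}`)
the random graph `H_m(σ)` is `n`-saturated. -/
theorem exists_m_randomGraph_nSaturated_pos_prob
    (k n : ℕ) (hn : 1 ≤ n) (E0 : Fin k → Fin k → Prop)
    (hsymm : Symmetric E0) (hrefl : Reflexive E0)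
    (hweak : IsWeaklyNSaturated E0 n) :
    ∃ m : ℕ,
      0 < uniformMeasure ({e // e ∈ randomPairs k m E0} → Bool)
            {σ | IsNSaturated (randomGraph E0 σ) n} := by
  obtain ⟨m, hm⟩ :=
    ((exists_m_randomGraph_nSaturated_pos_prob_general hweak).eventually_const_lt one_pos).exists
  exact ⟨m, (ENNReal.toReal_pos_iff.1 hm).1⟩
end

section
/- For every n ≥ 1 and every weakly n-saturated graph H₀ on a nonempty finite vertex set, there exist a graph H on a nonempty finite vertex set and a quotient map p : V(H) → V(H₀) such that: (a) H is n-saturated, and (b) for every q < n, whenever v, v₁, …, v_q ∈ V(H₀) are such that each v_r is adjacent to v in H₀, and w₁, …, w_q ∈ V(H) satisfy p(w_r) = v_r for all r, there exists w ∈ V(H) with p(w) = v which is adjacent in H to every w_r. -/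
/-- A quotient map of graphs: a surjective strict homomorphism. A homomorphism `h` is
strict if every edge of the target between vertices in the range of `h` is the image of
an edge of the source. -/
def IsGraphQuotientMap {V W : Type*} (E : V → V → Prop) (E' : W → W → Prop)
    (h : V → W) : Prop :=
  Function.Surjective h ∧ (∀ a b, E a b → E' (h a) (h b)) ∧
    ∀ u v, E' u v → u ∈ Set.range h → v ∈ Set.range h →
      ∃ a b, E a b ∧ h a = u ∧ h b = v

/-!
It suffices to find a finite symmetric relation `R` on the total space of some `p : V → V0` that
realises every adjacency pattern inside every fibre of `p`: the graph
`a = b ∨ E0 (p a) (p b) ∧ R a b` then has all the required properties, weak saturation of `E0`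
providing the fibre in which a given pattern is to be realised.

For `R`, let a vertex be a pair of a block and a bit string, and let the bit string encode a short
program: a fibre, some positions at which to probe the bit strings of other vertices, and a short
list of templates, each consisting of a block and the expected answers. A vertex recognises those
vertices which fit one of its templates, and `R` holds when one vertex recognises the other. A
program mentions only boundedly many positions, each costing logarithmically many bits, so long bit
strings can encode every program about bit strings of their own length. Given `e₁, …, eₙ`, some
program recognises precisely the prescribed ones, as `n²` probes tell them apart; placed in a block
which no `eᵢ` occupies or mentions, it is a new vertex and is not recognised by any `eᵢ`.
-/

theorem exists_pos_mul_pow_le_two_pow (c k : ℕ) : ∃ L, 0 < L ∧ c * L ^ k ≤ 2 ^ L := by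
  have hlim := (tendsto_pow_const_div_const_pow_of_one_lt k one_lt_two (r := (2 : ℝ))).const_mul
    (c : ℝ)
  rw [mul_zero] at hlim
  obtain ⟨L, hL, hpos⟩ :=
    ((hlim.eventually_le_const one_pos).and (Filter.eventually_gt_atTop 0)).exists
  rw [← mul_div_assoc, div_le_one (by positivity)] at hL
  exact ⟨L, hpos, mod_cast hL⟩

theorem exists_bitString_decoder (σ γ : Type*) [Finite σ] [Finite γ] [Nonempty γ] :
    ∃ (L : ℕ) (dec : (Fin L → Bool) → (σ → Fin L) × γ), 0 < L ∧ Function.Surjective dec := by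
  classical
  have := Fintype.ofFinite σ
  have := Fintype.ofFinite γ
  obtain ⟨L, hpos, hL⟩ := exists_pos_mul_pow_le_two_pow (Fintype.card γ) (Fintype.card σ)
  have : Nonempty (Fin L) := ⟨⟨0, hpos⟩⟩
  have hcard : Fintype.card ((σ → Fin L) × γ) ≤ Fintype.card (Fin L → Bool) := by
    simpa [mul_comm] using hL
  obtain ⟨enc⟩ := Function.Embedding.nonempty_of_card_le hcard
  exact ⟨L, Function.invFun enc, hpos, Function.invFun_surjective enc.injective⟩

theorem exists_separating_probe {κ π α : Type*} [Nonempty π] (x : κ → π → α) :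
    ∃ t : κ × κ → π, ∀ k l, x k ∘ t = x l ∘ t → x k = x l := by
  have hsep (s : κ × κ) : ∃ c, x s.1 c = x s.2 c → x s.1 = x s.2 := by
    by_contra! h
    exact (h (Classical.arbitrary π)).2 (funext fun c => (h c).1)
  choose t ht using hsep
  exact ⟨t, fun k l h => ht (k, l) (congrFun h (k, l))⟩

/-- The program carried by a vertex. It names the fibre of the vertex, the positions at which to
probe bit strings, and for each index in `κ` a template: a block and the expected answers, with a
flag telling whether the template is active. -/
structure Program (ι κ π β : Type*) where
  fiber : ι
  probe : κ × κ → π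
  template : κ → Bool × β × (κ × κ → Bool)

theorem Program.exists_decoder (ι κ β : Type*) [Finite ι] [Nonempty ι] [Finite κ] [Finite β]
    [Nonempty β] :
    ∃ (L : ℕ) (dec : (Fin L → Bool) → Program ι κ (Fin L) β),
      0 < L ∧ Function.Surjective dec := by
  obtain ⟨L, dec, hpos, hdec⟩ :=
    exists_bitString_decoder (κ × κ) (ι × (κ → Bool × β × (κ × κ → Bool)))
  refine ⟨L, fun x => ⟨(dec x).2.1, (dec x).1, (dec x).2.2⟩, hpos, fun P => ?_⟩
  obtain ⟨x, hx⟩ := hdec (P.probe, P.fiber, P.template)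
  exact ⟨x, by simp only [hx]⟩

section Recognition

variable {ι κ π β : Type*}

/-- The vertex `a`, consisting of a block and a bit string, fits an active template of `P`. -/
def Program.Recognizes (P : Program ι κ π β) (a : β × (π → Bool)) : Prop :=
  ∃ k, P.template k = (true, a.1, a.2 ∘ P.probe)

theorem Program.exists_recognizes_iff [Nonempty π] (e : κ → β × (π → Bool))
    (f : β × (π → Bool) → Bool) (i : ι) :
    ∃ P : Program ι κ π β, P.fiber = i ∧ ∀ k, P.Recognizes (e k) ↔ f (e k) = true := by
  obtain ⟨t, ht⟩ := exists_separating_probe fun k => (e k).2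
  refine ⟨⟨i, t, fun k => (f (e k), (e k).1, (e k).2 ∘ t)⟩, rfl, fun k => ⟨?_, fun h => ?_⟩⟩
  · rintro ⟨l, hl⟩
    obtain ⟨hf, hblock, hbits⟩ :
        f (e l) = true ∧ (e l).1 = (e k).1 ∧ (e l).2 ∘ t = (e k).2 ∘ t := by
      simpa only [Prod.mk.injEq] using hl
    rwa [← Prod.ext hblock (ht l k hbits)]
  · exact ⟨k, by simp only [h]⟩

theorem Program.exists_fresh_block [Fintype κ] [Fintype β]
    (hcard : Fintype.card (κ ⊕ κ × κ) < Fintype.card β) (b : κ → β) (P : κ → Program ι κ π β) :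
    ∃ b₀, (∀ k, b k ≠ b₀) ∧ ∀ k x, ¬ (P k).Recognizes (b₀, x) := by
  let used : κ ⊕ κ × κ → β := Sum.elim b fun s => ((P s.1).template s.2).2.1
  have hused : ¬ Function.Surjective used := fun h =>
    hcard.not_ge (Fintype.card_le_of_surjective used h)
  obtain ⟨b₀, hb₀⟩ := not_forall.1 hused
  refine ⟨b₀, fun k hk => hb₀ ⟨.inl k, hk⟩, ?_⟩
  rintro k x ⟨l, hl⟩
  exact hb₀ ⟨.inr (k, l), by simp only [used, Sum.elim_inr, hl]⟩

/-- The graph on pairs of a block and a bit string, the latter decoded by `dec`, in which two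
vertices are adjacent when one of them recognises the other. -/
def RecognitionAdj (dec : (π → Bool) → Program ι κ π β) (a b : β × (π → Bool)) : Prop :=
  (dec a.2).Recognizes b ∨ (dec b.2).Recognizes a

instance (dec : (π → Bool) → Program ι κ π β) : Std.Symm (RecognitionAdj dec) :=
  ⟨fun _ _ => Or.symm⟩

theorem RecognitionAdj.exists_extension [Nonempty π] [Fintype κ] [Fintype β]
    (hcard : Fintype.card (κ ⊕ κ × κ) < Fintype.card β)
    {dec : (π → Bool) → Program ι κ π β} (hdec : Function.Surjective dec)
    (e : κ → β × (π → Bool)) (f : β × (π → Bool) → Bool) (i : ι) :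
    ∃ y : β × (π → Bool), (dec y.2).fiber = i ∧
      ∀ k, e k ≠ y ∧ (RecognitionAdj dec (e k) y ↔ f (e k) = true) := by
  obtain ⟨P, hfiber, hP⟩ := Program.exists_recognizes_iff e f i
  obtain ⟨x, rfl⟩ := hdec P
  obtain ⟨b, hb, hunseen⟩ :=
    Program.exists_fresh_block hcard (fun k => (e k).1) fun k => dec (e k).2
  refine ⟨(b, x), hfiber, fun k => ⟨fun h => hb k (congrArg Prod.fst h), ?_⟩⟩
  exact (or_iff_right (hunseen k x)).trans (hP k)

end Recognition

theorem exists_fin_tuple_covering {V : Type*} [Nonempty V] {n : ℕ} (A : Finset V)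
    (hA : A.card ≤ n) : ∃ e : Fin n → V, ∀ a ∈ A, ∃ i, e i = a := by
  obtain ⟨g⟩ := Function.Embedding.nonempty_of_card_le (α := A) (β := Fin n) (by simpa using hA)
  exact ⟨Function.extend g Subtype.val fun _ => Classical.arbitrary V,
    fun a ha => ⟨g ⟨a, ha⟩, g.injective.extend_apply _ _ _⟩⟩

/-- Saturation inside every fibre of `p`: each adjacency pattern over fewer than `n` vertices is
realised by a new vertex of each prescribed fibre. -/
def IsFiberwiseNSaturated {V ι : Type*} (R : V → V → Prop) (p : V → ι) (n : ℕ) : Prop :=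
  ∀ A : Finset V, A.card < n → ∀ (f : V → Bool) (i : ι),
    ∃ x, x ∉ A ∧ p x = i ∧ ∀ a ∈ A, (R a x ↔ f a = true)

theorem exists_finite_isFiberwiseNSaturated (ι : Type*) [Finite ι] [Nonempty ι] (n : ℕ) :
    ∃ (V : Type) (_ : Fintype V) (R : V → V → Prop) (p : V → ι),
      Std.Symm R ∧ IsFiberwiseNSaturated R p n := by
  let β := Option (Fin n ⊕ Fin n × Fin n)
  obtain ⟨L, dec, hpos, hdec⟩ := Program.exists_decoder ι (Fin n) β
  have : Nonempty (Fin L) := ⟨⟨0, hpos⟩⟩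
  have hcard : Fintype.card (Fin n ⊕ Fin n × Fin n) < Fintype.card β := by
    rw [Fintype.card_option]
    exact Nat.lt_succ_self _
  refine ⟨β × (Fin L → Bool), inferInstance, RecognitionAdj dec, fun y => (dec y.2).fiber,
    inferInstance, fun A hA f i => ?_⟩
  obtain ⟨e, he⟩ := exists_fin_tuple_covering A hA.le
  obtain ⟨y, hfiber, hy⟩ := RecognitionAdj.exists_extension hcard hdec e f i
  refine ⟨y, fun hyA => ?_, hfiber, fun a ha => ?_⟩
  · obtain ⟨k, hk⟩ := he y hyA
    exact (hy k).1 hk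
  · obtain ⟨k, rfl⟩ := he a ha
    exact (hy k).2

/-- The reflexive graph obtained by pulling `E0` back along `p` and keeping only those edges between
distinct vertices which belong to `R`. -/
def PullbackAdj {V V0 : Type*} (E0 : V0 → V0 → Prop) (p : V → V0) (R : V → V → Prop) (a b : V) :
    Prop :=
  a = b ∨ E0 (p a) (p b) ∧ R a b

namespace PullbackAdj

variable {V V0 : Type*} {E0 : V0 → V0 → Prop} {p : V → V0} {R : V → V → Prop}

theorem symm [Std.Symm E0] [Std.Symm R] {a b : V} :
    PullbackAdj E0 p R a b → PullbackAdj E0 p R b a :=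
  Or.imp Eq.symm (And.imp (Std.Symm.symm _ _) (Std.Symm.symm _ _))

theorem map [Std.Refl E0] {a b : V} : PullbackAdj E0 p R a b → E0 (p a) (p b) := by
  rintro (rfl | ⟨h, -⟩)
  exacts [Std.Refl.refl _, h]

end PullbackAdj

namespace IsFiberwiseNSaturated

variable {V V0 : Type*} {E0 : V0 → V0 → Prop} {p : V → V0} {R : V → V → Prop} {m n : ℕ}

theorem mono (hR : IsFiberwiseNSaturated R p n) (hmn : m ≤ n) : IsFiberwiseNSaturated R p m :=
  fun A hA => hR A (hA.trans_le hmn)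

theorem exists_pullbackAdj (hR : IsFiberwiseNSaturated R p n) {κ : Type*} [Fintype κ]
    (hκ : Fintype.card κ < n) {v : V0} (w : κ → V) (hw : ∀ k, E0 (p (w k)) v) :
    ∃ x, p x = v ∧ ∀ k, PullbackAdj E0 p R (w k) x := by
  classical
  obtain ⟨x, -, rfl, hx⟩ :=
    hR (Finset.univ.image w) (Finset.card_image_le.trans_lt hκ) (fun _ => true) v
  exact ⟨x, rfl, fun k =>
    Or.inr ⟨hw k, (hx _ (Finset.mem_image_of_mem w (Finset.mem_univ k))).2 rfl⟩⟩

theorem isGraphQuotientMap [Std.Refl E0] (hR : IsFiberwiseNSaturated R p 2) :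
    IsGraphQuotientMap (PullbackAdj E0 p R) E0 p := by
  refine ⟨fun v => ?_, fun _ _ => PullbackAdj.map, ?_⟩
  · obtain ⟨x, -, hx, -⟩ := hR ∅ Nat.two_pos (fun _ => true) v
    exact ⟨x, hx⟩
  · rintro _ v huv ⟨a, rfl⟩ -
    obtain ⟨b, hb, hab⟩ :=
      hR.exists_pullbackAdj (κ := Unit) Nat.one_lt_two (fun _ => a) fun _ => huv
    exact ⟨a, b, hab (), rfl, hb⟩

theorem isNSaturated_pullbackAdj (hR : IsFiberwiseNSaturated R p n)
    (hE0 : IsWeaklyNSaturated E0 n) : IsNSaturated (PullbackAdj E0 p R) n := by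
  classical
  intro A hA f
  obtain ⟨v, hv⟩ := hE0 (A.image p) (Finset.card_image_le.trans_lt hA)
  obtain ⟨x, hxA, rfl, hx⟩ := hR A hA f v
  refine ⟨x, hxA, fun a ha => ?_⟩
  have hne : a ≠ x := ne_of_mem_of_not_mem ha hxA
  have hadj : E0 (p a) (p x) := hv _ (Finset.mem_image_of_mem p ha)
  rw [← hx a ha, PullbackAdj, or_iff_right hne, and_iff_right hadj]

end IsFiberwiseNSaturated

/-- For every `n ≥ 1` and every weakly `n`-saturated graph `H₀` on a nonempty finite
vertex set, there are a graph `H` on a nonempty finite vertex set and a quotient map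
`p : V(H) → V(H₀)` such that (a) `H` is `n`-saturated and (b) for every `q < n`, whenever
`v, v₁, …, v_q ∈ V(H₀)` are such that each `v_r` is adjacent to `v` in `H₀` and
`w₁, …, w_q ∈ V(H)` satisfy `p (w_r) = v_r`, there is `w ∈ V(H)` with `p w = v` adjacent
in `H` to every `w_r`. -/
theorem exists_nSaturated_quotient_extension
    (n : ℕ) (hn : 1 ≤ n) (V0 : Type) [Fintype V0] [Nonempty V0]
    (E0 : V0 → V0 → Prop) (hsymm : Symmetric E0) (hrefl : Reflexive E0)
    (hweak : IsWeaklyNSaturated E0 n) :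
    ∃ (V : Type) (_ : Fintype V) (_ : Nonempty V) (E : V → V → Prop) (p : V → V0),
      Symmetric E ∧ Reflexive E ∧ IsGraphQuotientMap E E0 p ∧
      IsNSaturated E n ∧
      (∀ q : ℕ, q < n → ∀ (v : V0) (vs : Fin q → V0), (∀ r, E0 (vs r) v) →
        ∀ ws : Fin q → V, (∀ r, p (ws r) = vs r) →
          ∃ w : V, p w = v ∧ ∀ r, E (ws r) w) := by
  have : Std.Symm E0 := ⟨hsymm⟩
  have : Std.Refl E0 := ⟨hrefl⟩
  -- `n + 1` because strictness extends a single vertex, even when `n = 1`.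
  obtain ⟨V, _, R, p, _, hR⟩ := exists_finite_isFiberwiseNSaturated V0 (n + 1)
  have hRn := hR.mono n.le_succ
  have hquot : IsGraphQuotientMap (PullbackAdj E0 p R) E0 p :=
    (hR.mono (Nat.succ_le_succ hn)).isGraphQuotientMap
  refine ⟨V, inferInstance, hquot.1.nonempty, PullbackAdj E0 p R, p,
    fun _ _ => PullbackAdj.symm, fun _ => Or.inl rfl, hquot,
    hRn.isNSaturated_pullbackAdj hweak, fun q hq v vs hvs ws hws => ?_⟩
  obtain rfl : p ∘ ws = vs := funext hws
  exact hRn.exists_pullbackAdj (by rwa [Fintype.card_fin]) ws hvs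
end

section
/- Let (G_n)_{n∈ℕ} be graphs on finite nonempty vertex sets V_n with edge relations E_n, and let each p_n : V_{n+1} → V_n be a quotient map of graphs. Let G = (L, E) be the inverse limit graph: L = {a ∈ Π_n V_n : ∀ n, a(n) = p_n(a(n+1))} and E(a,b) ⟺ ∀ n, E_n(a(n), b(n)). Then for every n the projection q_n : L → V_n, q_n(a) = a(n), is a quotient map of graphs from G onto G_n; in particular q_n is surjective, E(a,b) implies E_n(a(n),b(n)), and for every edge (u,v) ∈ E_n there exist a, b ∈ L with E(a,b), a(n) = u and b(n) = v. -/
/-- The vertex set of the inverse limit of the system `(V_n, p_n)`: the set of coherent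
sequences in `Π n, V n`. -/
abbrev InvLimVerts (V : ℕ → Type*) (p : ∀ n, V (n + 1) → V n) : Type _ :=
  {a : ∀ n, V n // ∀ n, a n = p n (a (n + 1))}

/-- The edge relation of the inverse limit graph: two coherent sequences are adjacent iff
they are adjacent coordinatewise. -/
def InvLimEdge {V : ℕ → Type*} {p : ∀ n, V (n + 1) → V n}
    (E : ∀ n, V n → V n → Prop) (a b : InvLimVerts V p) : Prop :=
  ∀ n, E n (a.1 n) (b.1 n)

/-!
The edges of the graphs `G_n` themselves form an inverse system of sets, along the maps induced by
the `p_n`, and strictness and surjectivity of the `p_n` make these induced maps surjective. A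
coherent sequence of edges is the same thing as an edge of `G`, so lifting vertices and lifting
edges are two instances of one fact: in an inverse sequence of surjections every element of the
`n`-th set is the `n`-th term of a coherent sequence.
-/

theorem InvLimVerts.surjective_eval {V : ℕ → Type*} {p : ∀ n, V (n + 1) → V n}
    (hp : ∀ n, Function.Surjective (p n)) (n : ℕ) :
    Function.Surjective (fun a : InvLimVerts V p => a.1 n) := by
  induction n generalizing V with
  | zero =>
    intro x
    choose lift p_lift using hp
    exact ⟨⟨fun k => Nat.rec x lift k, fun k => (p_lift k _).symm⟩, rfl⟩
  | succ n ih =>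
    intro x
    obtain ⟨⟨tail, htail⟩, hx⟩ := ih (fun k => hp (k + 1)) x
    refine ⟨⟨fun k => Nat.casesOn k (p 0 (tail 0)) tail, fun k => ?_⟩, hx⟩
    cases k with
    | zero => rfl
    | succ k => exact htail k

/-- The edges of a graph, as ordered pairs of vertices, so that the endpoints of an edge can be
lifted simultaneously. -/
abbrev GraphEdge {V : Type*} (E : V → V → Prop) : Type _ :=
  {e : V × V // E e.1 e.2}

/-- The map on edges induced by a graph homomorphism. -/
def GraphEdge.map {V W : Type*} {E : V → V → Prop} {E' : W → W → Prop} {h : V → W}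
    (hom : ∀ a b, E a b → E' (h a) (h b)) : GraphEdge E → GraphEdge E' :=
  Subtype.map (Prod.map h h) fun e he => hom e.1 e.2 he

namespace IsGraphQuotientMap

variable {V W : Type*} {E : V → V → Prop} {E' : W → W → Prop} {h : V → W}

theorem exists_edge_lift (hq : IsGraphQuotientMap E E' h) {u v : W} (huv : E' u v) :
    ∃ a b, E a b ∧ h a = u ∧ h b = v :=
  hq.2.2 u v huv (hq.1 u) (hq.1 v)

theorem surjective_graphEdgeMap (hq : IsGraphQuotientMap E E' h) :
    Function.Surjective (GraphEdge.map hq.2.1) := by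
  rintro ⟨⟨u, v⟩, huv⟩
  obtain ⟨a, b, hab, rfl, rfl⟩ := hq.exists_edge_lift huv
  exact ⟨⟨(a, b), hab⟩, rfl⟩

end IsGraphQuotientMap

section

variable {V : ℕ → Type*} {E : ∀ n, V n → V n → Prop} {p : ∀ n, V (n + 1) → V n}

theorem InvLimEdge.exists_lift_of_surjective_graphEdgeMap
    (hom : ∀ n a b, E (n + 1) a b → E n (p n a) (p n b))
    (hsurj : ∀ n, Function.Surjective (GraphEdge.map (hom n)))
    {n : ℕ} {u v : V n} (huv : E n u v) :
    ∃ a b : InvLimVerts V p, InvLimEdge E a b ∧ a.1 n = u ∧ b.1 n = v := by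
  obtain ⟨⟨e, he⟩, hen : e n = ⟨(u, v), huv⟩⟩ := InvLimVerts.surjective_eval hsurj n ⟨(u, v), huv⟩
  let source : InvLimVerts V p := ⟨fun k => (e k).1.1, fun k => congrArg (·.1.1) (he k)⟩
  let target : InvLimVerts V p := ⟨fun k => (e k).1.2, fun k => congrArg (·.1.2) (he k)⟩
  exact ⟨source, target, fun k => (e k).2, congrArg (·.1.1) hen, congrArg (·.1.2) hen⟩

theorem invLim_projection_is_quotient_map_general
    (hquot : ∀ n, IsGraphQuotientMap (E (n + 1)) (E n) (p n)) (n : ℕ) :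
    IsGraphQuotientMap (InvLimEdge (p := p) E) (E n) (fun a : InvLimVerts V p => a.1 n) :=
  ⟨InvLimVerts.surjective_eval (fun k => (hquot k).1) n, fun _ _ hab => hab n,
    fun _ _ huv _ _ => InvLimEdge.exists_lift_of_surjective_graphEdgeMap
      (fun k => (hquot k).2.1) (fun k => (hquot k).surjective_graphEdgeMap) huv⟩

end

/-- Let `(G_n)` be graphs on finite nonempty vertex sets with each bonding map
`p_n : V_{n+1} → V_n` a quotient map of graphs. Then, for the inverse limit graph
`G = (L, E)`, every projection `q_n : L → V_n`, `q_n a = a n`, is a quotient map of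
graphs onto `G_n`; in particular `q_n` is surjective, `E a b` implies
`E_n (a n) (b n)`, and every edge `(u, v)` of `G_n` lifts to an edge of `G`. -/
theorem invLim_projection_is_quotient_map
    (V : ℕ → Type*) [∀ n, Fintype (V n)] [∀ n, Nonempty (V n)]
    (E : ∀ n, V n → V n → Prop)
    (hsymm : ∀ n, Symmetric (E n)) (hrefl : ∀ n, Reflexive (E n))
    (p : ∀ n, V (n + 1) → V n)
    (hquot : ∀ n, IsGraphQuotientMap (E (n + 1)) (E n) (p n)) :
    ∀ n : ℕ,
      IsGraphQuotientMap (InvLimEdge (p := p) E) (E n)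
        (fun a : InvLimVerts V p => a.1 n) ∧
      Function.Surjective (fun a : InvLimVerts V p => a.1 n) ∧
      (∀ a b : InvLimVerts V p, InvLimEdge E a b → E n (a.1 n) (b.1 n)) ∧
      (∀ u v : V n, E n u v →
        ∃ a b : InvLimVerts V p, InvLimEdge E a b ∧ a.1 n = u ∧ b.1 n = v) := by
  intro n
  have hn := invLim_projection_is_quotient_map_general hquot n
  exact ⟨hn, hn.1, hn.2.1, fun _ _ => hn.exists_edge_lift⟩
end
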